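/- For every real λ with 0 < λ < 1 and all natural numbers n and k, the integral ∫_0^∞ π_n^{(λ)}(μ) · p_k^{(λ)}(μ) dμ equals C(k,n) · λ^n · (1-λ)^{k-n} if k ≥ n, and equals 0 if k < n, where C(k,n) is the binomial coefficient. In particular, each p_k^{(λ)} is an observable distribution: all these pairings are non-negative. -/

import Mathlib

open MeasureTheory

/-- The `n`-th Laguerre polynomial, `L n x = ∑_{j=0}^n (-1)^j C(n,j) x^j / j!`. -/
noncomputable def laguerre (n : ℕ) (x : ℝ) : ℝ :=
  ∑ j ∈ Finset.range (n + 1), (-1 : ℝ) ^ j * (n.choose j) * x ^ j / (j.factorial)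

/-- The quantum state function `π_n^{(λ)}` of the `λ`-quantization. -/
noncomputable def piQuant (lam : ℝ) (n : ℕ) (μ : ℝ) : ℝ :=
  (1 / (1 - lam)) * (-lam / (1 - lam)) ^ n * laguerre n (μ / (lam * (1 - lam))) *
    Real.exp (-μ / (1 - lam))

/-- The basic observable distribution `p_k^{(λ)}`. -/
noncomputable def pBasic (lam : ℝ) (k : ℕ) (μ : ℝ) : ℝ :=
  (1 / (lam * (k.factorial : ℝ))) * (μ / lam) ^ k * Real.exp (-μ / lam)

/-!
Since `1 / (1 - λ) + 1 / λ = 1 / (λ (1 - λ))`, the substitution `x = μ / (λ (1 - λ))` turns the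
pairing into a multiple of `∫ L_n(x) x ^ k e ^ (-x) dx`. Integrating the Laguerre polynomial term by
term gives `k! ∑ j, (-1) ^ j C(n, j) C(k + j, k)`, which up to sign is the `n`-th forward difference
of `x ↦ C(x, k)` at `x = k`, that is `C(k, k - n) = C(k, n)` for `n ≤ k` and zero
otherwise.
-/

open scoped Nat

lemma fwdDiff_iter_choose_of_lt {n k : ℕ} (hkn : k < n) :
    (fwdDiff 1)^[n] (fun x ↦ x.choose k : ℕ → ℤ) = 0 := by
  obtain ⟨d, rfl⟩ := Nat.exists_eq_add_of_lt hkn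
  have hconst : (fwdDiff 1)^[k] (fun x ↦ x.choose k : ℕ → ℤ) = fun _ ↦ 1 := by
    simpa using fwdDiff_iter_choose 0 k
  have hzero : (fwdDiff 1)^[d] (0 : ℕ → ℤ) = 0 :=
    Function.iterate_fixed (fwdDiff_const 1 0) d
  rw [show k + d + 1 = d + 1 + k by ring, Function.iterate_add_apply, hconst,
    Function.iterate_succ_apply, fwdDiff_const]
  exact hzero

lemma fwdDiff_iter_choose_apply_self (n k : ℕ) :
    (fwdDiff 1)^[n] (fun x ↦ x.choose k : ℕ → ℤ) k = k.choose n := by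
  obtain hnk | hkn := le_or_gt n k
  · obtain ⟨d, rfl⟩ := Nat.exists_eq_add_of_le hnk
    rw [fwdDiff_iter_choose, Nat.choose_symm_add]
  · rw [fwdDiff_iter_choose_of_lt hkn, Nat.choose_eq_zero_of_lt hkn, Pi.zero_apply, Nat.cast_zero]

lemma sum_range_neg_one_pow_mul_choose_mul_choose_add (n k : ℕ) :
    ∑ j ∈ Finset.range (n + 1), (-1 : ℤ) ^ j * n.choose j * (k + j).choose k =
      (-1) ^ n * k.choose n := by
  rw [← fwdDiff_iter_choose_apply_self, fwdDiff_iter_eq_sum_shift, Finset.mul_sum]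
  refine Finset.sum_congr rfl fun j hj ↦ ?_
  have hsign : (-1 : ℤ) ^ n * (-1) ^ (n - j) = (-1) ^ j := by
    obtain ⟨d, rfl⟩ := Nat.exists_eq_add_of_le (Finset.mem_range_succ_iff.1 hj)
    rw [Nat.add_sub_cancel_left, pow_add, mul_assoc, ← mul_pow, neg_one_mul, neg_neg, one_pow,
      mul_one]
  simp only [smul_eq_mul, mul_one, ← hsign]
  ring

lemma integrableOn_pow_mul_exp_neg_Ioi (m : ℕ) :
    IntegrableOn (fun x : ℝ ↦ x ^ m * Real.exp (-x)) (Set.Ioi 0) := by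
  simpa [mul_comm] using Real.GammaIntegral_convergent (s := m + 1) (by positivity)

lemma integral_pow_mul_exp_neg_Ioi (m : ℕ) :
    ∫ x in Set.Ioi (0 : ℝ), x ^ m * Real.exp (-x) = m ! := by
  rw [← Real.Gamma_nat_eq_factorial, Real.Gamma_eq_integral (by positivity)]
  simp [mul_comm]

lemma laguerre_mul_pow_mul_exp_neg (n k : ℕ) (x : ℝ) :
    laguerre n x * (x ^ k * Real.exp (-x)) =
      ∑ j ∈ Finset.range (n + 1),
        (-1 : ℝ) ^ j * n.choose j / j ! * (x ^ (k + j) * Real.exp (-x)) := by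
  rw [laguerre, Finset.sum_mul]
  exact Finset.sum_congr rfl fun j _ ↦ by ring

lemma integral_laguerre_mul_pow_mul_exp_neg (n k : ℕ) :
    ∫ x in Set.Ioi (0 : ℝ), laguerre n x * (x ^ k * Real.exp (-x)) =
      (-1) ^ n * k ! * k.choose n := by
  have hfactorial (j : ℕ) : ((k + j)! : ℝ) = (k + j).choose k * k ! * j ! := by
    rw [Nat.choose_symm_add]
    exact_mod_cast (Nat.add_choose_mul_factorial_mul_factorial k j).symm
  calc ∫ x in Set.Ioi (0 : ℝ), laguerre n x * (x ^ k * Real.exp (-x))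
    _ = ∑ j ∈ Finset.range (n + 1), (-1 : ℝ) ^ j * n.choose j / j ! * (k + j)! := by
      simp_rw [laguerre_mul_pow_mul_exp_neg]
      rw [integral_finsetSum _ fun j _ ↦ (integrableOn_pow_mul_exp_neg_Ioi (k + j)).const_mul _]
      simp_rw [integral_const_mul, integral_pow_mul_exp_neg_Ioi]
    _ = k ! * ∑ j ∈ Finset.range (n + 1), (-1 : ℝ) ^ j * n.choose j * (k + j).choose k := by
      rw [Finset.mul_sum]
      refine Finset.sum_congr rfl fun j _ ↦ ?_
      rw [hfactorial]
      field_simp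
    _ = k ! * ((-1) ^ n * k.choose n) := by
      congr 1
      exact_mod_cast sum_range_neg_one_pow_mul_choose_mul_choose_add n k
    _ = (-1) ^ n * k ! * k.choose n := by ring

lemma piQuant_mul_pBasic {lam : ℝ} (hlam0 : lam ≠ 0) (hlam1 : lam ≠ 1) (n k : ℕ) (μ : ℝ) :
    piQuant lam n μ * pBasic lam k μ =
      (lam * (1 - lam))⁻¹ * (-lam / (1 - lam)) ^ n * (1 - lam) ^ k / k ! *
        (laguerre n ((lam * (1 - lam))⁻¹ * μ) *
          (((lam * (1 - lam))⁻¹ * μ) ^ k * Real.exp (-((lam * (1 - lam))⁻¹ * μ)))) := by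
  have hsub : 1 - lam ≠ 0 := sub_ne_zero.2 hlam1.symm
  have hexp : Real.exp (-μ / (1 - lam)) * Real.exp (-μ / lam) =
      Real.exp (-((lam * (1 - lam))⁻¹ * μ)) := by
    rw [← Real.exp_add]
    congr 1
    field
  have hpow : (μ / lam) ^ k = (1 - lam) ^ k * ((lam * (1 - lam))⁻¹ * μ) ^ k := by
    rw [← mul_pow]
    congr 1
    field
  rw [piQuant, pBasic, hpow, ← hexp, div_eq_inv_mul μ (lam * (1 - lam))]
  field

/-- For `k < n` the truncated exponent `k - n` is harmless, since then `k.choose n = 0`. -/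
lemma integral_piQuant_mul_pBasic {lam : ℝ} (hlam0 : 0 < lam) (hlam1 : lam < 1) (n k : ℕ) :
    ∫ μ in Set.Ioi (0 : ℝ), piQuant lam n μ * pBasic lam k μ =
      k.choose n * lam ^ n * (1 - lam) ^ (k - n) := by
  have hsub : 0 < 1 - lam := sub_pos.2 hlam1
  have hscale : 0 < (lam * (1 - lam))⁻¹ := by positivity
  simp_rw [piQuant_mul_pBasic hlam0.ne' hlam1.ne]
  rw [integral_const_mul, integral_comp_mul_left_Ioi
    (fun x ↦ laguerre n x * (x ^ k * Real.exp (-x))) 0 hscale, mul_zero,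
    integral_laguerre_mul_pow_mul_exp_neg, smul_eq_mul, neg_div, neg_pow, div_pow]
  obtain hnk | hkn := le_or_gt n k
  · have hsign : ((-1 : ℝ) ^ n) ^ 2 = 1 := by rw [← pow_mul, mul_comm, pow_mul, neg_one_sq, one_pow]
    rw [pow_sub₀ _ hsub.ne' hnk]
    field_simp
    rw [hsign, one_mul]
  · simp [Nat.choose_eq_zero_of_lt hkn]

/-- Pairings of the quantum states with the basic observable distributions;
in particular all the pairings are non-negative. -/
theorem piQuant_pBasic_pairing (lam : ℝ) (hlam0 : 0 < lam) (hlam1 : lam < 1) (n k : ℕ) :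
    (∫ μ in Set.Ioi (0 : ℝ), piQuant lam n μ * pBasic lam k μ =
      if n ≤ k then (k.choose n : ℝ) * lam ^ n * (1 - lam) ^ (k - n) else 0) ∧
    0 ≤ ∫ μ in Set.Ioi (0 : ℝ), piQuant lam n μ * pBasic lam k μ := by
  rw [integral_piQuant_mul_pBasic hlam0 hlam1]
  refine ⟨?_, by have := sub_pos.2 hlam1; positivity⟩
  split_ifs with hnk
  · rfl
  · simp [Nat.choose_eq_zero_of_lt (not_le.1 hnk)]
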